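/- arXiv:2310.01048 — 2 statements merged into one kernel-verified Lean document; each statement's English description precedes it below -/
import Mathlib

section
/- Uniform gap between logarithmic derivatives of the eigenfunctions (Lemma 6.3): Let μ ≥ 1 and a, r : ℝ → ℝ continuous with 1/μ ≤ a(x) ≤ μ and |r(x)| ≤ μ for all x, let γ > γ̲, and let φ_γ and φ̃_γ be generalized principal eigenfunctions. Then there exists ε > 0 such that φ̃_γ'(x)/φ̃_γ(x) ≥ φ_γ'(x)/φ_γ(x) + ε for all x ∈ ℝ. -/
open MeasureTheory Filter

/-- The generalized principal eigenvalue `γ̲`: the supremum over nonzero compactly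
supported `C¹` functions `φ` of the Rayleigh quotient
`(∫ (r φ² − a (φ')²))/(∫ φ²)`. -/
noncomputable def gammaBar (a r : ℝ → ℝ) : ℝ :=
  sSup {c : ℝ | ∃ φ : ℝ → ℝ, ContDiff ℝ 1 φ ∧ HasCompactSupport φ ∧ φ ≠ 0 ∧
    c = (∫ x : ℝ, (r x * φ x ^ 2 - a x * deriv φ x ^ 2)) / ∫ x : ℝ, φ x ^ 2}

/-- A generalized principal eigenfunction `φ` (with explicit derivative `φ'`):
positive, `φ(0) = 1`, `(aφ')' + (r − γ)φ = 0` pointwise, and `φ → 0` along the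
filter `l` (`atTop` for `φ_γ`, `atBot` for `φ̃_γ`). -/
def IsGenPrincEig (a r : ℝ → ℝ) (γ : ℝ) (l : Filter ℝ) (φ φ' : ℝ → ℝ) : Prop :=
  (∀ x, 0 < φ x) ∧ φ 0 = 1 ∧
  (∀ x, HasDerivAt φ (φ' x) x) ∧
  (∀ x, HasDerivAt (fun y => a y * φ' y) ((γ - r x) * φ x) x) ∧
  Tendsto φ l (nhds 0)

/-- One half of the regularity package of a solution. -/
lemma aux_phi_cont (a r φ φ' : ℝ → ℝ) (γ μ : ℝ) (hμ : 1 ≤ μ) (hac : Continuous a)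
    (ha : ∀ x, 1 / μ ≤ a x ∧ a x ≤ μ)
    (h2 : ∀ x, HasDerivAt (fun y => a y * φ' y) ((γ - r x) * φ x) x) : Continuous φ' := by
  have hpos : ∀ x, a x ≠ 0 := fun x => by
    have : 0 < 1 / μ := by positivity
    linarith [(ha x).1, this] |> fun h : (0:ℝ) < a x => h.ne'
  have hc : Continuous (fun y => a y * φ' y) :=
    continuous_iff_continuousAt.2 fun x => (h2 x).continuousAt
  have : φ' = fun y => (a y * φ' y) / a y := by
    funext y; field_simp [hpos y]
  rw [this]
  exact hc.div hac hpos

/-- Rayleigh quotient bound. -/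
lemma aux_rayleigh (μ : ℝ) (hμ : 1 ≤ μ) (a r : ℝ → ℝ)
    (hac : Continuous a) (hrc : Continuous r)
    (ha : ∀ x, 1 / μ ≤ a x ∧ a x ≤ μ) (hr : ∀ x, |r x| ≤ μ)
    (u : ℝ → ℝ) (hu : ContDiff ℝ 1 u) (hs : HasCompactSupport u) :
    (∫ x : ℝ, (r x * u x ^ 2 - a x * deriv u x ^ 2)) ≤ gammaBar a r * ∫ x : ℝ, u x ^ 2 := by
  have hapos : ∀ x, 0 < a x := fun x => by
    have : 0 < 1 / μ := by positivity
    linarith [(ha x).1, this]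
  by_cases hu0 : u = 0
  · subst hu0; simp
  have hbdd : BddAbove {c : ℝ | ∃ φ : ℝ → ℝ, ContDiff ℝ 1 φ ∧ HasCompactSupport φ ∧ φ ≠ 0 ∧
    c = (∫ x : ℝ, (r x * φ x ^ 2 - a x * deriv φ x ^ 2)) / ∫ x : ℝ, φ x ^ 2} := by
    refine ⟨μ, ?_⟩
    rintro c ⟨v, hv, hvs, -, rfl⟩
    have hdc : Continuous (deriv v) := hv.continuous_deriv le_rfl
    have hvc : Continuous v := hv.continuous
    have hvs2 : HasCompactSupport (fun x => v x ^ 2) :=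
      hvs.comp_left (g := fun t : ℝ => t ^ 2) (by simp)
    have hds2 : HasCompactSupport (fun x => deriv v x ^ 2) :=
      hvs.deriv.comp_left (g := fun t : ℝ => t ^ 2) (by simp)
    have i1 : Integrable (fun x => v x ^ 2) :=
      (hvc.pow 2).integrable_of_hasCompactSupport hvs2
    have i2 : Integrable (fun x => r x * v x ^ 2) :=
      (hrc.mul (hvc.pow 2)).integrable_of_hasCompactSupport (hvs2.mul_left)
    have i3 : Integrable (fun x => a x * deriv v x ^ 2) :=
      (hac.mul (hdc.pow 2)).integrable_of_hasCompactSupport (hds2.mul_left)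
    apply div_le_of_le_mul₀ (integral_nonneg fun x => sq_nonneg _) (by linarith)
    rw [← integral_const_mul]
    refine integral_mono (i2.sub i3) (i1.const_mul μ) fun x => ?_
    have := (abs_le.1 (hr x)).2
    have h1 : 0 ≤ a x * deriv v x ^ 2 := mul_nonneg (hapos x).le (sq_nonneg _)
    have h2 : r x * v x ^ 2 ≤ μ * v x ^ 2 := mul_le_mul_of_nonneg_right this (sq_nonneg _)
    simp only
    linarith
  have hle := le_csSup hbdd ⟨u, hu, hs, hu0, rfl⟩
  have hpos : 0 < ∫ x : ℝ, u x ^ 2 := by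
    obtain ⟨z, hz⟩ := Function.ne_iff.1 hu0
    exact (hu.continuous.pow 2).integral_pos_of_hasCompactSupport_nonneg_nonzero
      (hs.comp_left (g := fun t : ℝ => t ^ 2) (by simp)) (fun x => sq_nonneg _)
      (x := z) (by simpa using hz)
  exact (div_le_iff₀ hpos).1 hle

/-- Weighted Hardy inequality from the ground state substitution. -/
lemma aux_ground (μ : ℝ) (hμ : 1 ≤ μ) (a r : ℝ → ℝ)
    (hac : Continuous a) (hrc : Continuous r)
    (ha : ∀ x, 1 / μ ≤ a x ∧ a x ≤ μ) (hr : ∀ x, |r x| ≤ μ) (γ : ℝ)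
    (φ φ' : ℝ → ℝ) (h1 : ∀ x, HasDerivAt φ (φ' x) x)
    (h2 : ∀ x, HasDerivAt (fun y => a y * φ' y) ((γ - r x) * φ x) x)
    (v v' : ℝ → ℝ) (hv : ∀ x, HasDerivAt v (v' x) x) (hvc' : Continuous v')
    (hs : HasCompactSupport v) :
    (γ - gammaBar a r) * ∫ x, (v x * φ x) ^ 2 ≤ ∫ x, a x * (v' x) ^ 2 * φ x ^ 2 := by
  have hφ'c := aux_phi_cont a r φ φ' γ μ hμ hac ha h2
  have hφc : Continuous φ := continuous_iff_continuousAt.2 fun x => (h1 x).continuousAt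
  have hvc : Continuous v := continuous_iff_continuousAt.2 fun x => (hv x).continuousAt
  have hv'eq : v' = deriv v := funext fun x => (hv x).deriv.symm
  have hs' : HasCompactSupport v' := hv'eq ▸ hs.deriv
  have hud : ∀ x, HasDerivAt (fun x => v x * φ x) (v' x * φ x + v x * φ' x) x :=
    fun x => (hv x).mul (h1 x)
  have hderiv : deriv (fun x => v x * φ x) = fun x => v' x * φ x + v x * φ' x :=
    funext fun x => (hud x).deriv
  have huC : ContDiff ℝ 1 (fun x => v x * φ x) := by
    rw [contDiff_one_iff_deriv]
    refine ⟨fun x => (hud x).differentiableAt, ?_⟩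
    rw [hderiv]; fun_prop
  have hus : HasCompactSupport (fun x => v x * φ x) := hs.mul_right
  have hR := aux_rayleigh μ hμ a r hac hrc ha hr _ huC hus
  simp only [hderiv] at hR
  have hus2 : HasCompactSupport (fun x => (v x * φ x) ^ 2) :=
    hus.comp_left (g := fun t : ℝ => t ^ 2) (by simp)
  have hds : HasCompactSupport (fun x => v' x * φ x + v x * φ' x) := hderiv ▸ hus.deriv
  have hds2 : HasCompactSupport (fun x => (v' x * φ x + v x * φ' x) ^ 2) :=
    hds.comp_left (g := fun t : ℝ => t ^ 2) (by simp)
  have hvs2 : HasCompactSupport (fun x => a x * v' x ^ 2 * φ x ^ 2) :=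
    ((hs'.comp_left (g := fun t : ℝ => t ^ 2) (by simp)).mul_left (f := a)).mul_right
  have i1 : Integrable (fun x => (v x * φ x) ^ 2) :=
    (by fun_prop : Continuous fun x => (v x * φ x) ^ 2).integrable_of_hasCompactSupport hus2
  have i2 : Integrable (fun x => r x * (v x * φ x) ^ 2 - a x * (v' x * φ x + v x * φ' x) ^ 2) :=
    ((by fun_prop : Continuous fun x => r x * (v x * φ x) ^ 2).integrable_of_hasCompactSupport
      hus2.mul_left).sub
    ((by fun_prop : Continuous fun x => a x * (v' x * φ x + v x * φ' x) ^ 2).integrable_of_hasCompactSupport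
      hds2.mul_left)
  have i3 : Integrable (fun x => a x * v' x ^ 2 * φ x ^ 2) :=
    (by fun_prop : Continuous fun x => a x * v' x ^ 2 * φ x ^ 2).integrable_of_hasCompactSupport hvs2
  have hg : ∀ x, HasDerivAt (fun x => (a x * φ' x) * (v x * (v x * φ x)))
      (γ * (v x * φ x) ^ 2 - (r x * (v x * φ x) ^ 2 - a x * (v' x * φ x + v x * φ' x) ^ 2)
        - a x * v' x ^ 2 * φ x ^ 2) x := by
    intro x
    refine HasDerivAt.congr_deriv ((h2 x).mul ((hv x).mul (hud x))) ?_
    ring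
  have i4 : Integrable (fun x => (a x * φ' x) * (v x * (v x * φ x))) :=
    (by fun_prop : Continuous fun x => (a x * φ' x) * (v x * (v x * φ x))).integrable_of_hasCompactSupport
      (hs.mul_right.mul_left)
  have key := integral_eq_zero_of_hasDerivAt_of_integrable hg
    (((i1.const_mul γ).sub i2).sub i3) i4
  have e : ∫ x, (γ * (v x * φ x) ^ 2 - (r x * (v x * φ x) ^ 2 - a x * (v' x * φ x + v x * φ' x) ^ 2)
        - a x * v' x ^ 2 * φ x ^ 2) = γ * (∫ x, (v x * φ x) ^ 2)
      - (∫ x, (r x * (v x * φ x) ^ 2 - a x * (v' x * φ x + v x * φ' x) ^ 2))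
      - ∫ x, a x * v' x ^ 2 * φ x ^ 2 := by
    have i12 : Integrable (fun x => γ * (v x * φ x) ^ 2
        - (r x * (v x * φ x) ^ 2 - a x * (v' x * φ x + v x * φ' x) ^ 2)) :=
      (i1.const_mul γ).sub i2
    rw [integral_sub i12 i3, integral_sub (i1.const_mul γ) i2,
      integral_const_mul]
  rw [e] at key
  linarith

/-- A family of cut-offs. -/
lemma aux_cutoff : ∃ C0 : ℝ, 0 ≤ C0 ∧ ∀ R : ℝ, 0 < R → ∃ η η' : ℝ → ℝ,
    (∀ x, HasDerivAt η (η' x) x) ∧ Continuous η' ∧ (∀ x, 0 ≤ η x ∧ η x ≤ 1) ∧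
    (∀ x, |x| ≤ R → η x = 1) ∧ (∀ x, 2 * R ≤ |x| → η x = 0) ∧ (∀ x, |η' x| ≤ C0 / R) := by
  let θ : ContDiffBump (0 : ℝ) := ⟨1, 2, by norm_num, by norm_num⟩
  have hθ : ContDiff ℝ 1 θ := θ.contDiff
  have hdc : Continuous (deriv θ) := hθ.continuous_deriv le_rfl
  obtain ⟨C, hC⟩ := hdc.bounded_above_of_compact_support θ.hasCompactSupport.deriv
  refine ⟨C, (norm_nonneg _).trans (hC 0), fun R hR => ?_⟩
  refine ⟨fun x => θ (x / R), fun x => deriv θ (x / R) * (1 / R), ?_, by fun_prop, ?_, ?_, ?_, ?_⟩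
  · intro x
    exact ((hθ.differentiable one_ne_zero).differentiableAt.hasDerivAt).comp x
      ((hasDerivAt_id x).div_const R)
  · exact fun x => ⟨θ.nonneg, θ.le_one⟩
  · intro x hx
    apply θ.one_of_mem_closedBall
    simp only [Metric.mem_closedBall, dist_zero_right, Real.norm_eq_abs, abs_div, abs_of_pos hR]
    exact (div_le_one hR).2 hx
  · intro x hx
    apply θ.zero_of_le_dist
    simp only [dist_zero_right, Real.norm_eq_abs, abs_div, abs_of_pos hR]
    exact (le_div_iff₀ hR).2 hx
  · intro x
    rw [abs_mul, abs_of_pos (by positivity : 0 < 1 / R), mul_one_div]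
    gcongr
    exact hC _

lemma aux_test (μ : ℝ) (hμ : 1 ≤ μ) (a r : ℝ → ℝ)
    (hac : Continuous a) (hrc : Continuous r)
    (ha : ∀ x, 1 / μ ≤ a x ∧ a x ≤ μ) (hr : ∀ x, |r x| ≤ μ) (γ : ℝ)
    (hγ : gammaBar a r < γ)
    (φ φ' : ℝ → ℝ) (h1 : ∀ x, HasDerivAt φ (φ' x) x)
    (h2 : ∀ x, HasDerivAt (fun y => a y * φ' y) ((γ - r x) * φ x) x)
    (χ χ' D : ℝ → ℝ) (hχ : ∀ x, HasDerivAt χ (χ' x) x) (hχc' : Continuous χ')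
    (hD : ∀ x, HasDerivAt D (a x * χ' x ^ 2 * φ x ^ 2) x)
    (C B : ℝ) (hC : ∀ x, |χ x * φ x| ≤ C) (hB : ∀ x y, D x - D y ≤ B) (y : ℝ) :
    (γ - gammaBar a r) * (∫ x in (y - 1)..y, (χ x * φ x) ^ 2) ≤ 2 * B := by
  obtain ⟨C0, hC0, hcut⟩ := aux_cutoff
  have hapos : ∀ x, 0 < a x := fun x => by
    have : 0 < 1 / μ := by positivity
    linarith [(ha x).1, this]
  have hφc : Continuous φ := continuous_iff_continuousAt.2 fun x => (h1 x).continuousAt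
  have hχc : Continuous χ := continuous_iff_continuousAt.2 fun x => (hχ x).continuousAt
  have main : ∀ R : ℝ, |y| + 1 ≤ R →
      (γ - gammaBar a r) * (∫ x in (y - 1)..y, (χ x * φ x) ^ 2)
        ≤ (12 * μ * C ^ 2 * C0 ^ 2) / R + 2 * B := by
    intro R hRy
    have hR : 0 < R := by linarith [abs_nonneg y]
    obtain ⟨η, η', hη, hηc', hη01, hη1, hη0, hηb⟩ := hcut R hR
    have hηc : Continuous η := continuous_iff_continuousAt.2 fun x => (hη x).continuousAt
    have hv : ∀ x, HasDerivAt (fun x => η x * χ x) (η' x * χ x + η x * χ' x) x :=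
      fun x => (hη x).mul (hχ x)
    have hηs : HasCompactSupport η := by
      apply HasCompactSupport.of_support_subset_isCompact (isCompact_Icc (a := -(2*R)) (b := 2*R))
      intro x hx
      by_contra hn
      apply hx
      apply hη0
      by_contra hlt
      push Not at hlt
      exact hn ⟨(abs_lt.1 hlt).1.le, (abs_lt.1 hlt).2.le⟩
    have hs : HasCompactSupport (fun x => η x * χ x) := hηs.mul_right
    have hv'c : Continuous (fun x => η' x * χ x + η x * χ' x) := by fun_prop
    have hG := aux_ground μ hμ a r hac hrc ha hr γ φ φ' h1 h2 _ _ hv hv'c hs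
    have hη'0 : ∀ x, 2 * R < |x| → η' x = 0 := by
      intro x hx
      have : HasDerivAt η 0 x := by
        refine (hasDerivAt_const x (0:ℝ)).congr_of_eventuallyEq ?_
        filter_upwards [continuous_abs.continuousAt.eventually (lt_mem_nhds hx)] with z hz
        exact hη0 z hz.le
      exact (hη x).unique this
    -- lower bound
    have hlow : (∫ x in (y - 1)..y, (χ x * φ x) ^ 2) ≤ ∫ x, (η x * χ x * φ x) ^ 2 := by
      have e : (∫ x in (y - 1)..y, (χ x * φ x) ^ 2)
          = ∫ x in Set.Ioc (y-1) y, (η x * χ x * φ x) ^ 2 := by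
        rw [intervalIntegral.integral_of_le (by linarith)]
        apply setIntegral_congr_fun measurableSet_Ioc
        intro x hx
        have : η x = 1 := by
          apply hη1
          rw [abs_le]
          constructor <;> linarith [hx.1, hx.2, neg_abs_le y, le_abs_self y]
        simp [this]
      rw [e]
      apply setIntegral_le_integral
      · apply Continuous.integrable_of_hasCompactSupport (by fun_prop)
        exact (hs.mul_right (f' := φ)).comp_left (g := fun t : ℝ => t ^ 2) (by simp)
      · exact Filter.Eventually.of_forall fun x => sq_nonneg _
    -- upper bound
    have hup : ∫ x, a x * (η' x * χ x + η x * χ' x) ^ 2 * φ x ^ 2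
        ≤ (12 * μ * C ^ 2 * C0 ^ 2) / R + 2 * B := by
      rw [← intervalIntegral.integral_eq_integral_of_support_subset (a := -(3*R)) (b := 3*R)]
      · have hc1 : Continuous (fun x => a x * (η' x * χ x + η x * χ' x) ^ 2 * φ x ^ 2) := by fun_prop
        have hc2 : Continuous (fun x => a x * χ' x ^ 2 * φ x ^ 2) := by fun_prop
        have hc3 : Continuous (fun x => 2 * μ * C ^ 2 * (C0 / R) ^ 2
            + 2 * (a x * χ' x ^ 2 * φ x ^ 2)) := by fun_prop
        have hm : (∫ x in (-(3*R))..(3*R), a x * (η' x * χ x + η x * χ' x) ^ 2 * φ x ^ 2)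
            ≤ ∫ x in (-(3*R))..(3*R), (2 * μ * C ^ 2 * (C0 / R) ^ 2
            + 2 * (a x * χ' x ^ 2 * φ x ^ 2)) := by
          apply intervalIntegral.integral_mono_on (by linarith) (hc1.intervalIntegrable _ _)
            (hc3.intervalIntegrable _ _)
          intro x _
          have e1 : η' x ^ 2 ≤ (C0 / R) ^ 2 := sq_le_sq' (abs_le.1 (hηb x)).1 (abs_le.1 (hηb x)).2
          have e2 : (χ x * φ x) ^ 2 ≤ C ^ 2 := sq_le_sq' (abs_le.1 (hC x)).1 (abs_le.1 (hC x)).2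
          have e3 : η x ^ 2 ≤ 1 := by nlinarith [hη01 x]
          have e4 : a x * ((χ x * φ x) ^ 2 * η' x ^ 2) ≤ μ * (C ^ 2 * (C0 / R) ^ 2) := by
            have := (ha x).2
            have := (hapos x).le
            gcongr
          have e5 : η x ^ 2 * (a x * χ' x ^ 2 * φ x ^ 2) ≤ 1 * (a x * χ' x ^ 2 * φ x ^ 2) := by
            have := (hapos x).le
            gcongr
          have e6 : 0 ≤ a x * φ x ^ 2 * (η' x * χ x - η x * χ' x) ^ 2 := by
            have := (hapos x).le
            positivity
          nlinarith
        refine hm.trans ?_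
        rw [intervalIntegral.integral_add (by simp)
          ((hc2.intervalIntegrable _ _).const_mul 2), intervalIntegral.integral_const,
          intervalIntegral.integral_const_mul,
          intervalIntegral.integral_eq_sub_of_hasDerivAt (fun x _ => hD x)
            (hc2.intervalIntegrable _ _)]
        have := hB (3*R) (-(3*R))
        have e : (3 * R - -(3*R)) • (2 * μ * C ^ 2 * (C0 / R) ^ 2)
          = (12 * μ * C ^ 2 * C0 ^ 2) / R := by
          rw [smul_eq_mul]; field_simp; ring
        rw [e]; linarith
      · intro x hx
        by_contra hn
        apply hx
        have hx2 : 2 * R < |x| := by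
          by_contra hlt
          push Not at hlt
          exact hn ⟨by linarith [(abs_le.1 hlt).1], by linarith [(abs_le.1 hlt).2]⟩
        simp [hη'0 x hx2, hη0 x hx2.le]
    have hδ : 0 ≤ γ - gammaBar a r := by linarith
    calc _ ≤ _ := mul_le_mul_of_nonneg_left hlow hδ
      _ ≤ _ := hG
      _ ≤ _ := hup
  have ht : Tendsto (fun R : ℝ => (12 * μ * C ^ 2 * C0 ^ 2) / R + 2 * B) atTop
      (nhds (0 + 2 * B)) :=
    (tendsto_const_nhds.div_atTop tendsto_id).add tendsto_const_nhds
  rw [zero_add] at ht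
  refine ge_of_tendsto ht ?_
  filter_upwards [eventually_ge_atTop (|y| + 1)] with R hR using main R hR

/-- Upper bound on the logarithmic derivative. -/
lemma aux_riccati (μ : ℝ) (hμ : 1 ≤ μ) (a r : ℝ → ℝ)
    (ha : ∀ x, 1 / μ ≤ a x ∧ a x ≤ μ) (hr : ∀ x, |r x| ≤ μ) (γ : ℝ)
    (φ φ' : ℝ → ℝ) (hpos : ∀ x, 0 < φ x) (h1 : ∀ x, HasDerivAt φ (φ' x) x)
    (h2 : ∀ x, HasDerivAt (fun y => a y * φ' y) ((γ - r x) * φ x) x) (y : ℝ) :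
    a y * φ' y / φ y ≤ 3 * μ + |γ| := by
  set p : ℝ → ℝ := fun x => a x * φ' x / φ x with hp
  have hapos : ∀ x, 0 < a x := fun x => by
    have : 0 < 1 / μ := by positivity
    linarith [(ha x).1, this]
  have hpd : ∀ x, HasDerivAt p ((γ - r x) - p x ^ 2 / a x) x := by
    intro x
    have h0 := (hpos x).ne'
    have h3 := (hapos x).ne'
    refine HasDerivAt.congr_deriv ((h2 x).div (h1 x) h0) ?_
    simp only [hp]
    field_simp
  have hpc : Continuous p := continuous_iff_continuousAt.2 fun x => (hpd x).continuousAt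
  change p y ≤ _
  by_contra hcon
  push Not at hcon
  have hg := abs_nonneg γ
  have hpy : 0 < p y := by linarith
  set v : ℝ → ℝ := fun x => p x * (1 - (x - y) ^ 2) with hv
  have hvd : ∀ x, HasDerivAt v (((γ - r x) - p x ^ 2 / a x) * (1 - (x - y) ^ 2)
      + p x * (-(2 * (x - y)))) x := by
    intro x
    have : HasDerivAt (fun x : ℝ => 1 - (x - y) ^ 2) (-(2 * (x - y))) x := by
      refine HasDerivAt.congr_deriv ((((hasDerivAt_id x).sub_const y).pow 2).const_sub 1) ?_
      simp
    exact (hpd x).mul this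
  have hvc : Continuous v := continuous_iff_continuousAt.2 fun x => (hvd x).continuousAt
  obtain ⟨z, hz, hmax⟩ := isCompact_Icc.exists_isMaxOn
    (Set.nonempty_Icc.2 (by linarith : y - 1 ≤ y + 1)) hvc.continuousOn
  have hvy : v y = p y := by simp [hv]
  have hvz : p y ≤ v z := hvy ▸ hmax (a := y) ⟨by linarith, by linarith⟩
  have hz1 : z ≠ y - 1 := by
    rintro rfl
    have : v (y - 1) = 0 := by simp [hv]
    linarith
  have hz2 : z ≠ y + 1 := by
    rintro rfl
    have : v (y + 1) = 0 := by simp [hv]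
    linarith
  have hlt1 : y - 1 < z := lt_of_le_of_ne hz.1 (Ne.symm hz1)
  have hlt2 : z < y + 1 := lt_of_le_of_ne hz.2 hz2
  have hloc : IsLocalMax v z := hmax.isLocalMax (Icc_mem_nhds hlt1 hlt2)
  have h0 := hloc.hasDerivAt_eq_zero (hvd z)
  have hs : 0 < 1 - (z - y) ^ 2 := by nlinarith
  have hs1 : 1 - (z - y) ^ 2 ≤ 1 := by nlinarith
  have hpz : 0 < p z := by
    have : 0 < p z * (1 - (z - y) ^ 2) := lt_of_lt_of_le hpy hvz
    exact (pos_iff_pos_of_mul_pos this).2 hs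
  have hK : γ - r z ≤ |γ| + μ := by
    linarith [le_abs_self γ, (abs_le.1 (hr z)).1]
  have hdiv : p z ^ 2 / μ ≤ p z ^ 2 / a z :=
    div_le_div_of_nonneg_left (sq_nonneg _) (hapos z) (ha z).2
  set s := 1 - (z - y) ^ 2 with hsdef
  have hvz' : v z = p z * s := rfl
  have hV : 3 * μ + |γ| < p z * s := by linarith
  have h4 : p z ^ 2 / μ * s ≤ (|γ| + μ) * s + 2 * p z := by nlinarith
  have h5 : p z ^ 2 * s ≤ μ * ((|γ| + μ) * s + 2 * p z) := by
    have := mul_le_mul_of_nonneg_left h4 (by linarith : 0 ≤ μ)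
    have e : μ * (p z ^ 2 / μ * s) = p z ^ 2 * s := by field_simp
    linarith
  have h6 : (p z * s) ^ 2 ≤ μ * ((|γ| + μ) + 2 * (p z * s)) := by
    have := mul_le_mul_of_nonneg_right h5 hs.le
    have e : s * s ≤ 1 := by nlinarith
    have e2 : μ * (|γ| + μ) * (s * s) ≤ μ * (|γ| + μ) * 1 :=
      mul_le_mul_of_nonneg_left e (by positivity)
    nlinarith
  nlinarith

lemma aux_harnack (μ : ℝ) (hμ : 1 ≤ μ) (a r : ℝ → ℝ)
    (ha : ∀ x, 1 / μ ≤ a x ∧ a x ≤ μ) (hr : ∀ x, |r x| ≤ μ) (γ : ℝ)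
    (φ φ' : ℝ → ℝ) (hpos : ∀ x, 0 < φ x) (h1 : ∀ x, HasDerivAt φ (φ' x) x)
    (h2 : ∀ x, HasDerivAt (fun y => a y * φ' y) ((γ - r x) * φ x) x) (y x : ℝ)
    (hx : x ∈ Set.Icc (y - 1) y) :
    Real.exp (-(μ * (3 * μ + |γ|))) * φ y ≤ φ x := by
  set N := μ * (3 * μ + |γ|) with hN
  have hN0 : 0 ≤ N := by positivity
  have hle : ∀ z, φ' z ≤ N * φ z := by
    intro z
    have hz := aux_riccati μ hμ a r ha hr γ φ φ' hpos h1 h2 z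
    rw [div_le_iff₀ (hpos z)] at hz
    have haz : 0 < a z := lt_of_lt_of_le (by positivity) (ha z).1
    have h3 : 1 ≤ μ * a z := by
      have := mul_le_mul_of_nonneg_left (ha z).1 (by linarith : 0 ≤ μ)
      rwa [mul_one_div_cancel (by positivity)] at this
    have hK : 0 ≤ (3 * μ + |γ|) * φ z := mul_nonneg (by positivity) (hpos z).le
    by_contra hc
    push Not at hc
    have : a z * (N * φ z) < (3 * μ + |γ|) * φ z :=
      lt_of_lt_of_le (mul_lt_mul_of_pos_left hc haz) hz
    have e : a z * (N * φ z) = (μ * a z) * ((3 * μ + |γ|) * φ z) := by rw [hN]; ring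
    nlinarith
  have hd : ∀ z, HasDerivAt (fun z => Real.exp (-(N * z)) * φ z)
      (Real.exp (-(N * z)) * (-(N * 1)) * φ z + Real.exp (-(N * z)) * φ' z) z := fun z =>
    ((((hasDerivAt_id z).const_mul N).neg).exp).mul (h1 z)
  have hanti : Antitone (fun z => Real.exp (-(N * z)) * φ z) := by
    apply antitone_of_deriv_nonpos (fun z => (hd z).differentiableAt)
    intro z
    rw [(hd z).deriv]
    have := mul_nonneg (Real.exp_pos (-(N * z))).le (sub_nonneg.2 (hle z))
    linarith
  have h := hanti hx.2
  simp only at h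
  have e : Real.exp (-(N * y)) = Real.exp (-(N * x)) * Real.exp (-(N * (y - x))) := by
    rw [← Real.exp_add]; ring_nf
  rw [e, mul_assoc] at h
  have h := le_of_mul_le_mul_left h (Real.exp_pos _)
  refine le_trans ?_ h
  apply mul_le_mul_of_nonneg_right _ (hpos y).le
  apply Real.exp_le_exp.2
  nlinarith [hx.1]

lemma aux_bounded (f : ℝ → ℝ) (hf : Continuous f) (ht : Tendsto f atTop (nhds 0)) :
    ∃ C, 0 ≤ C ∧ ∀ x, 0 ≤ x → f x ≤ C := by
  obtain ⟨X, hX⟩ := eventually_atTop.1 (ht.eventually (gt_mem_nhds zero_lt_one))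
  obtain ⟨M, hM⟩ := isCompact_Icc.bddAbove_image (hf.continuousOn (s := Set.Icc 0 X))
  refine ⟨max 1 M, le_trans zero_le_one (le_max_left _ _), fun x hx => ?_⟩
  rcases le_total X x with h | h
  · exact (hX x h).le.trans (le_max_left _ _)
  · exact (hM ⟨x, ⟨hx, h⟩, rfl⟩).trans (le_max_right _ _)

/-- Lemma 6.3: uniform gap between the logarithmic derivatives of the two generalized
principal eigenfunctions: there is `ε > 0` with
`φ̃_γ'/φ̃_γ ≥ φ_γ'/φ_γ + ε` on `ℝ`. -/
theorem log_derivative_gap (μ : ℝ) (hμ : 1 ≤ μ) (a r : ℝ → ℝ)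
    (hac : Continuous a) (hrc : Continuous r)
    (ha : ∀ x, 1 / μ ≤ a x ∧ a x ≤ μ) (hr : ∀ x, |r x| ≤ μ)
    (γ : ℝ) (hγ : gammaBar a r < γ)
    (φ φ' φt φt' : ℝ → ℝ)
    (hφ : IsGenPrincEig a r γ Filter.atTop φ φ')
    (hφt : IsGenPrincEig a r γ Filter.atBot φt φt') :
    ∃ ε : ℝ, 0 < ε ∧ ∀ x : ℝ, φ' x / φ x + ε ≤ φt' x / φt x := by
  obtain ⟨hp, h0, h1, h2, ht⟩ := hφ
  obtain ⟨hq, k0, k1, k2, kt⟩ := hφt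
  have hapos : ∀ x, 0 < a x := fun x => lt_of_lt_of_le (by positivity) (ha x).1
  have hφc : Continuous φ := continuous_iff_continuousAt.2 fun x => (h1 x).continuousAt
  have hψc : Continuous φt := continuous_iff_continuousAt.2 fun x => (k1 x).continuousAt
  obtain ⟨C1, hC10, hC1⟩ := aux_bounded φ hφc ht
  obtain ⟨C2, hC20, hC2⟩ := aux_bounded (fun x => φt (-x)) (by fun_prop)
    (kt.comp tendsto_neg_atTop_atBot)
  have hC2' : ∀ x, x ≤ 0 → φt x ≤ C2 := fun x hx => by
    have := hC2 (-x) (by linarith)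
    simpa using this
  -- the Wronskian
  obtain ⟨W, hW⟩ : ∃ W, ∀ x, φ x * (a x * φt' x) - (a x * φ' x) * φt x = W := by
    refine ⟨φ 0 * (a 0 * φt' 0) - (a 0 * φ' 0) * φt 0, fun x => ?_⟩
    have hd : ∀ x, HasDerivAt (fun x => φ x * (a x * φt' x) - (a x * φ' x) * φt x) 0 x := by
      intro x
      refine HasDerivAt.congr_deriv (((h1 x).mul (k2 x)).sub ((h2 x).mul (k1 x))) ?_
      ring
    exact is_const_of_deriv_eq_zero (fun x => (hd x).differentiableAt) (fun x => (hd x).deriv) x 0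
  set h : ℝ → ℝ := fun x => φt x / φ x with hh
  have hhpos : ∀ x, 0 < h x := fun x => div_pos (hq x) (hp x)
  have hhd : ∀ x, HasDerivAt h (W / (a x * φ x ^ 2)) x := by
    intro x
    have e1 := (hp x).ne'
    have e2 := (hapos x).ne'
    refine HasDerivAt.congr_deriv ((k1 x).div (h1 x) e1) ?_
    rw [← hW x]
    field_simp
  have hhc : Continuous h := continuous_iff_continuousAt.2 fun x => (hhd x).continuousAt
  set δ := γ - gammaBar a r with hδ
  have hδ0 : 0 < δ := by linarith
  -- positivity of the Wronskian
  have hWpos : 0 < W := by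
    by_contra hWn
    push Not at hWn
    have hanti : Antitone h := by
      apply antitone_of_deriv_nonpos (fun z => (hhd z).differentiableAt)
      intro z
      rw [(hhd z).deriv]
      have := hapos z
      exact div_nonpos_of_nonpos_of_nonneg hWn (by positivity)
    have hb : ∀ x, |(1:ℝ) * φ x| ≤ max C1 C2 := by
      intro x
      rw [one_mul, abs_of_pos (hp x)]
      rcases le_total 0 x with hx | hx
      · exact (hC1 x hx).trans (le_max_left _ _)
      · have e := hanti hx
        simp only [hh, h0, k0, div_one] at e
        rw [le_div_iff₀ (hp x), one_mul] at e
        exact (e.trans (hC2' x hx)).trans (le_max_right _ _)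
    have := aux_test μ hμ a r hac hrc ha hr γ hγ φ φ' h1 h2 (fun _ => 1) (fun _ => 0) (fun _ => 0)
      (fun x => hasDerivAt_const x 1) continuous_const
      (fun x => by simpa using hasDerivAt_const x (0:ℝ)) _ 0 hb (by simp) 0
    have hpos : 0 < ∫ x in ((0:ℝ) - 1)..0, ((1:ℝ) * φ x) ^ 2 := by
      apply intervalIntegral.intervalIntegral_pos_of_pos
      · exact (by fun_prop : Continuous fun x => ((1:ℝ) * φ x) ^ 2).intervalIntegrable _ _
      · intro x
        have := hp x
        positivity
      · norm_num
    nlinarith [mul_pos hδ0 hpos]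
  set k := Real.exp (-(μ * (3 * μ + |γ|))) with hk
  have hk0 : 0 < k := Real.exp_pos _
  refine ⟨3 * δ * k ^ 2 / (8 * μ), by positivity, fun y => ?_⟩
  set t := h y with htdef
  have ht0 : 0 < t := hhpos y
  have hty : t * φ y = φt y := by
    rw [htdef, hh]; field_simp [(hp y).ne']
  have hhφ : ∀ x, h x * φ x = φt x := fun x => by
    rw [hh]; field_simp [(hp x).ne']
  have hsum : ∀ x, 0 < h x + t := fun x => add_pos (hhpos x) ht0
  have hχd : ∀ x, HasDerivAt (fun x => t * h x / (h x + t))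
      (t ^ 2 * W / (a x * φ x ^ 2 * (h x + t) ^ 2)) x := by
    intro x
    have e1 := (hsum x).ne'
    have e2 := (hapos x).ne'
    have e3 := (hp x).ne'
    refine HasDerivAt.congr_deriv (((hhd x).const_mul t).div ((hhd x).add_const t) e1) ?_
    field_simp
    ring
  have hDd : ∀ x, HasDerivAt (fun x => -(W * t ^ 4 / 3) * ((h x + t) ^ 3)⁻¹)
      (a x * (t ^ 2 * W / (a x * φ x ^ 2 * (h x + t) ^ 2)) ^ 2 * φ x ^ 2) x := by
    intro x
    have e1 := (hsum x).ne'
    have e2 := (hapos x).ne'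
    have e3 := (hp x).ne'
    refine HasDerivAt.congr_deriv (((((hhd x).add_const t).pow 3).inv (pow_ne_zero 3 e1)).const_mul (-(W * t ^ 4 / 3))) ?_
    simp only [Nat.cast_ofNat, Pi.pow_apply]
    field_simp
    try norm_num
    try ring
  have hχc' : Continuous (fun x => t ^ 2 * W / (a x * φ x ^ 2 * (h x + t) ^ 2)) := by
    apply Continuous.div (by fun_prop) (by fun_prop)
    intro x
    have e1 := hsum x
    have e2 := hapos x
    have e3 := hp x
    positivity
  have hb : ∀ x, |t * h x / (h x + t) * φ x| ≤ max (t * C1) C2 := by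
    intro x
    have e1 := hsum x
    have e3 := hp x
    have e4 := hhpos x
    rw [abs_of_pos (by positivity)]
    rcases le_total 0 x with hx | hx
    · refine le_trans ?_ (le_max_left _ _)
      have : t * h x / (h x + t) ≤ t := by
        rw [div_le_iff₀ e1]; nlinarith
      exact mul_le_mul this (hC1 x hx) e3.le ht0.le
    · refine le_trans ?_ ((hC2' x hx).trans (le_max_right _ _))
      have : t * h x / (h x + t) ≤ h x := by
        rw [div_le_iff₀ e1]; nlinarith
      rw [← hhφ x]
      exact mul_le_mul_of_nonneg_right this e3.le
  have hB : ∀ x z, -(W * t ^ 4 / 3) * ((h x + t) ^ 3)⁻¹ - -(W * t ^ 4 / 3) * ((h z + t) ^ 3)⁻¹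
      ≤ W * t / 3 := by
    intro x z
    have e1 : 0 ≤ (W * t ^ 4 / 3) * ((h x + t) ^ 3)⁻¹ := by
      have := hsum x
      positivity
    have e2 : (W * t ^ 4 / 3) * ((h z + t) ^ 3)⁻¹ ≤ (W * t ^ 4 / 3) * (t ^ 3)⁻¹ := by
      have := (hhpos z).le
      gcongr
      linarith
    have e3 : (W * t ^ 4 / 3) * (t ^ 3)⁻¹ = W * t / 3 := by field_simp
    linarith
  have key := aux_test μ hμ a r hac hrc ha hr γ hγ φ φ' h1 h2 _ _ _ hχd hχc' hDd _ _ hb hB y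
  have hlow : (k * φt y / 2) ^ 2 ≤ ∫ x in (y - 1)..y, (t * h x / (h x + t) * φ x) ^ 2 := by
    have : (∫ x in (y - 1)..y, (k * φt y / 2) ^ 2) ≤
        ∫ x in (y - 1)..y, (t * h x / (h x + t) * φ x) ^ 2 := by
      apply intervalIntegral.integral_mono_on (by linarith) (by simp)
      · apply Continuous.intervalIntegrable
        have : Continuous (fun x => t * h x / (h x + t)) :=
          (by fun_prop : Continuous fun x => t * h x).div (by fun_prop) fun x => (hsum x).ne'
        fun_prop
      · intro x hx
        have a1 := aux_harnack μ hμ a r ha hr γ φ φ' hp h1 h2 y x hx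
        have a2 := aux_harnack μ hμ a r ha hr γ φt φt' hq k1 k2 y x hx
        rw [← hk] at a1 a2
        have hqy := hq y
        apply pow_le_pow_left₀ (by positivity)
        have e1 := hsum x
        rw [div_mul_eq_mul_div, le_div_iff₀ e1]
        have a3 : k * φt y ≤ t * φ x := by rw [← hty]; nlinarith
        rw [← hhφ x] at a2
        have a4 := mul_le_mul_of_nonneg_left a2 ht0.le
        have a5 := mul_le_mul_of_nonneg_left a3 (hhpos x).le
        nlinarith
    simpa using this
  have k3 := (mul_le_mul_of_nonneg_left hlow hδ0.le).trans key
  have hay := hapos y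
  have hpy := hp y
  have hqy := hq y
  have e : φt' y / φt y - φ' y / φ y = W / (a y * φ y * φt y) := by
    rw [← hW y]; field_simp
  have hfin : 3 * δ * k ^ 2 / (8 * μ) ≤ W / (a y * φ y * φt y) := by
    have e1 : 3 * δ * k ^ 2 / 8 * (φ y * φt y) ≤ W := by
      have e2 : δ * (k * φt y / 2) ^ 2 * φ y ≤ 2 * (W * t / 3) * φ y :=
        mul_le_mul_of_nonneg_right k3 hpy.le
      have e3 : 2 * (W * t / 3) * φ y = 2 * W / 3 * φt y := by rw [← hty]; ring
      rw [e3] at e2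
      have e4 : (δ * k ^ 2 / 4 * (φ y * φt y)) * φt y ≤ (2 * W / 3) * φt y := by
        linarith
      have := le_of_mul_le_mul_right e4 hqy
      linarith
    rw [div_le_div_iff₀ (by positivity) (by positivity)]
    have e5 : 3 * δ * k ^ 2 * (φ y * φt y) * a y ≤ 3 * δ * k ^ 2 * (φ y * φt y) * μ :=
      mul_le_mul_of_nonneg_left (ha y).2 (by positivity)
    have e6 := mul_le_mul_of_nonneg_right e1 (by linarith : 0 ≤ 8 * μ)
    linarith
  linarith
end

section
/- Ellipticity of the invariant measure (Proposition 6.2): Let μ ≥ 1 and a, r : ℝ → ℝ continuous with 1/μ ≤ a(x) ≤ μ and |r(x)| ≤ μ for all x, let γ > γ̲, and let φ_γ and φ̃_γ be generalized principal eigenfunctions. Define ν_γ(x) := φ_γ(x)·φ̃_γ(x). Then inf_{x ∈ ℝ} ν_γ(x) > 0 and sup_{x ∈ ℝ} ν_γ(x) < ∞. -/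
open MeasureTheory Filter

lemma ime_rayleigh (μ : ℝ) (a r : ℝ → ℝ)
    (hac : Continuous a) (hrc : Continuous r)
    (ha : ∀ x, 0 ≤ a x) (hr : ∀ x, |r x| ≤ μ)
    (ψ : ℝ → ℝ) (hψ : ContDiff ℝ 1 ψ) (hs : HasCompactSupport ψ) :
    (∫ x : ℝ, (r x * ψ x ^ 2 - a x * deriv ψ x ^ 2)) ≤ gammaBar a r * ∫ x : ℝ, ψ x ^ 2 := by
  by_cases h0 : ψ = 0
  · subst h0
    have : deriv (0 : ℝ → ℝ) = 0 := by ext x; simp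
    simp [this]
  have hsq : ∀ φ : ℝ → ℝ, HasCompactSupport φ → HasCompactSupport (fun x => φ x ^ 2) :=
    fun φ h => h.comp_left (g := fun t : ℝ => t ^ 2) (by simp)
  have hpos : 0 < ∫ x : ℝ, ψ x ^ 2 := by
    obtain ⟨x, hx⟩ := Function.ne_iff.1 h0
    exact Continuous.integral_pos_of_hasCompactSupport_nonneg_nonzero (x := x)
      (hψ.continuous.pow 2) (hsq _ hs) (fun x => sq_nonneg _) (pow_ne_zero 2 hx)
  rw [← div_le_iff₀ hpos]
  refine le_csSup ?_ ⟨ψ, hψ, hs, h0, rfl⟩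
  refine ⟨μ, ?_⟩
  rintro c ⟨φ, hφ, hφs, -, rfl⟩
  have hμ : 0 ≤ μ := (abs_nonneg _).trans (hr 0)
  refine div_le_of_le_mul₀ (integral_nonneg fun x => sq_nonneg _) hμ ?_
  rw [← integral_const_mul]
  have hd : Continuous (deriv φ) := hφ.continuous_deriv le_rfl
  have i1 : Integrable (fun x => r x * φ x ^ 2) :=
    (hrc.mul (hφ.continuous.pow 2)).integrable_of_hasCompactSupport ((hsq _ hφs).mul_left)
  have i2 : Integrable (fun x => a x * deriv φ x ^ 2) :=
    (hac.mul (hd.pow 2)).integrable_of_hasCompactSupport ((hsq _ hφs.deriv).mul_left)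
  have i3 : Integrable (fun x => μ * φ x ^ 2) :=
    ((hφ.continuous.pow 2).integrable_of_hasCompactSupport (hsq _ hφs)).const_mul μ
  refine integral_mono (i1.sub i2) i3 fun x => ?_
  have h1 := (abs_le.1 (hr x)).2
  have h2 := mul_nonneg (ha x) (sq_nonneg (deriv φ x))
  have h3 := mul_le_mul_of_nonneg_right h1 (sq_nonneg (φ x))
  simp only
  linarith

lemma ime_riccati (M μ K : ℝ) (hμ : 0 < μ) (hK : 0 < K) (hKM : 2 * M * μ ≤ K ^ 2)
    (p p' : ℝ → ℝ) (hp : ∀ x, HasDerivAt p (p' x) x) (hle : ∀ x, p' x ≤ M - p x ^ 2 / μ)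
    (x : ℝ) : p x ≤ K := by
  by_contra! hx
  have key : ∀ y, K ≤ p y → p' y ≤ - (p y ^ 2 / (2 * μ)) := by
    intro y hy
    have h1 : K ^ 2 ≤ p y ^ 2 := by gcongr
    have h2 : M ≤ p y ^ 2 / (2 * μ) := by
      rw [le_div_iff₀ (by positivity)]; linarith
    have h3 : p y ^ 2 / μ = 2 * (p y ^ 2 / (2 * μ)) := by field_simp
    linarith [hle y]
  have hpc : Continuous p := continuous_iff_continuousAt.2 fun y => (hp y).continuousAt
  have hgt : ∀ y ≤ x, K < p y := by
    intro y hy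
    by_contra! hc
    have := image_le_of_deriv_right_lt_deriv_boundary (f := p) (f' := p') (a := y) (b := x)
      (B := fun _ => K) (B' := fun _ => 0) hpc.continuousOn
      (fun z _ => (hp z).hasDerivWithinAt) hc (fun z => hasDerivAt_const z K)
      (fun z _ hz => by
        have := key z hz.ge
        have h4 : 0 < p z ^ 2 / (2 * μ) := by rw [hz]; positivity
        linarith) ⟨hy, le_rfl⟩
    linarith
  have hmono : MonotoneOn (fun y => (p y)⁻¹ - y / (2 * μ)) (Set.Iic x) := by
    have hd : ∀ y ∈ Set.Iic x, HasDerivAt (fun y => (p y)⁻¹ - y / (2 * μ))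
        (- p' y / p y ^ 2 - 1 / (2 * μ)) y := by
      intro y hy
      exact ((hp y).fun_inv (by linarith [hgt y hy])).sub ((hasDerivAt_id y).div_const _)
    refine monotoneOn_of_deriv_nonneg (convex_Iic x)
      (fun y hy => (hd y hy).continuousAt.continuousWithinAt)
      (fun y hy => (hd y (interior_subset hy)).differentiableAt.differentiableWithinAt) ?_
    intro y hy
    have hy' := interior_subset hy
    rw [(hd y hy').deriv]
    have h5 := hgt y hy'
    have h6 := key y h5.le
    have h7 : 0 < p y := by linarith
    rw [sub_nonneg, div_le_div_iff₀ (by positivity) (by positivity)]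
    have : p y ^ 2 = (p y ^ 2 / (2 * μ)) * (2 * μ) := by field_simp
    nlinarith
  have hpx : 0 < p x := by linarith
  have hy : x - 2 * μ / p x ≤ x := by
    have : 0 < 2 * μ / p x := by positivity
    linarith
  have h8 := hmono (Set.mem_Iic.2 hy) (Set.mem_Iic.2 le_rfl) hy
  have h9 : 0 < (p (x - 2 * μ / p x))⁻¹ := inv_pos.2 (by linarith [hgt _ hy])
  simp only at h8
  have h10 : (x - 2 * μ / p x) / (2 * μ) = x / (2 * μ) - (p x)⁻¹ := by field_simp
  linarith

lemma ime_logder (μ : ℝ) (hμ : 1 ≤ μ) (a r : ℝ → ℝ)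
    (ha : ∀ x, 1 / μ ≤ a x ∧ a x ≤ μ) (hr : ∀ x, |r x| ≤ μ) (γ : ℝ) :
    ∃ K, 0 < K ∧ ∀ u u' : ℝ → ℝ, (∀ x, 0 < u x) → (∀ x, HasDerivAt u (u' x) x) →
      (∀ x, HasDerivAt (fun y => a y * u' y) ((γ - r x) * u x) x) →
      ∀ x, |a x * u' x| ≤ K * u x := by
  have hμ0 : 0 < μ := by linarith
  refine ⟨2 * (|γ| + μ) * μ + 1, by positivity, ?_⟩
  intro u u' hu hd hdd x
  set M := |γ| + μ with hM
  have hM0 : 0 ≤ M := by positivity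
  set K := 2 * M * μ + 1 with hK
  have hK0 : 0 < K := by positivity
  have hKM : 2 * M * μ ≤ K ^ 2 := by
    have : 0 ≤ 2 * M * μ := by positivity
    nlinarith
  let p : ℝ → ℝ := fun x => a x * u' x / u x
  let p' : ℝ → ℝ := fun x => ((γ - r x) * u x * u x - a x * u' x * u' x) / u x ^ 2
  have hp : ∀ x, HasDerivAt p (p' x) x := fun x => (hdd x).fun_div (hd x) (hu x).ne'
  have hle : ∀ x, p' x ≤ M - p x ^ 2 / μ := by
    intro x
    have hux := hu x
    have ha0 : 0 < a x := lt_of_lt_of_le (by positivity) (ha x).1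
    have e : p' x = (γ - r x) - p x ^ 2 / a x := by
      simp only [p, p']; field_simp
    rw [e]
    have h1 : p x ^ 2 / μ ≤ p x ^ 2 / a x :=
      div_le_div_of_nonneg_left (sq_nonneg _) ha0 (ha x).2
    have h2 := neg_abs_le (r x)
    have h3 := le_abs_self γ
    linarith [hr x]
  have up := ime_riccati M μ K hμ0 hK0 hKM p p' hp hle x
  have lo := ime_riccati M μ K hμ0 hK0 hKM (fun x => - p (-x)) (fun x => p' (-x))
    (fun x => by
      have := ((hp (-x)).comp x (hasDerivAt_neg x)).neg
      rw [mul_neg_one, neg_neg] at this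
      exact this) (fun x => by simpa using hle (-x)) (-x)
  simp only [neg_neg] at lo
  have hux := hu x
  have e : a x * u' x = p x * u x := by simp only [p]; field_simp
  rw [e, abs_mul, abs_of_pos hux]
  gcongr
  exact abs_le.2 ⟨by linarith, up⟩

lemma ime_harnack (k : ℝ) (hk : 0 < k) (u u' : ℝ → ℝ) (hu : ∀ x, 0 < u x)
    (hd : ∀ x, HasDerivAt u (u' x) x) (hb : ∀ x, |u' x| ≤ k * u x) (x₀ x : ℝ)
    (hx : |x - x₀| ≤ 1) : Real.exp (-k) * u x₀ ≤ u x := by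
  have hE : ∀ c x, HasDerivAt (fun x => Real.exp (c * x) * u x)
      (Real.exp (c * x) * c * u x + Real.exp (c * x) * u' x) x := by
    intro c x
    have h1 : HasDerivAt (fun x => Real.exp (c * x)) (Real.exp (c * x) * c) x := by
      simpa using ((hasDerivAt_id x).const_mul c).exp
    exact h1.mul (hd x)
  have hm : Monotone (fun x => Real.exp (k * x) * u x) := by
    refine monotone_of_deriv_nonneg (fun x => (hE k x).differentiableAt) fun x => ?_
    rw [(hE k x).deriv]
    have := (abs_le.1 (hb x)).1
    have e := Real.exp_pos (k * x)
    nlinarith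
  have hm2 : Antitone (fun x => Real.exp (-k * x) * u x) := by
    refine antitone_of_deriv_nonpos (fun x => (hE (-k) x).differentiableAt) fun x => ?_
    rw [(hE (-k) x).deriv]
    have := (abs_le.1 (hb x)).2
    have e := Real.exp_pos (-k * x)
    nlinarith
  have hu0 := hu x₀
  rcases le_total x₀ x with h | h
  · have h1 := hm h
    rw [abs_of_nonneg (by linarith)] at hx
    simp only at h1
    have h2 : Real.exp (k * (x₀ - x)) * u x₀ ≤ u x := by
      rw [mul_sub, Real.exp_sub, div_mul_eq_mul_div, div_le_iff₀ (Real.exp_pos _)]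
      linarith
    refine le_trans ?_ h2
    gcongr
    nlinarith
  · have h1 := hm2 h
    rw [abs_of_nonpos (by linarith)] at hx
    simp only at h1
    have h2 : Real.exp (-k * x₀ - -k * x) * u x₀ ≤ u x := by
      rw [Real.exp_sub, div_mul_eq_mul_div, div_le_iff₀ (Real.exp_pos _)]
      linarith
    refine le_trans ?_ h2
    gcongr
    nlinarith

lemma ime_energy (μ : ℝ) (hμ : 1 ≤ μ) (a r : ℝ → ℝ)
    (hac : Continuous a) (hrc : Continuous r)
    (ha : ∀ x, 1 / μ ≤ a x ∧ a x ≤ μ) (hr : ∀ x, |r x| ≤ μ)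
    (γ : ℝ) (hγ : gammaBar a r < γ)
    (z z' f : ℝ → ℝ) (hz : ∀ x, 0 < z x) (hd : ∀ x, HasDerivAt z (z' x) x)
    (hdd : ∀ x, HasDerivAt (fun y => a y * z' y) ((γ - r x) * z x - f x) x)
    (hf : ∀ x, 0 ≤ f x) (hfc : Continuous f) (Z : ℝ) (hZ : ∀ x, z x ≤ Z)
    (E : ℝ) (hE : ∀ A, 0 ≤ A → ∫ x in (-A)..A, z x * f x ≤ E)
    (x₀ m : ℝ) (hm : 0 ≤ m) (hzm : ∀ x, |x - x₀| ≤ 1 → m ≤ z x) :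
    (γ - gammaBar a r) * (2 * m ^ 2) ≤ E := by
  have hμ0 : 0 < μ := by linarith
  have ha0 : ∀ x, 0 < a x := fun x => lt_of_lt_of_le (by positivity) (ha x).1
  have hzc : Continuous z := continuous_iff_continuousAt.2 fun y => (hd y).continuousAt
  have hz'c : Continuous z' := by
    have h1 : Continuous (fun y => a y * z' y) :=
      continuous_iff_continuousAt.2 fun y => (hdd y).continuousAt
    have h2 : z' = fun y => (a y * z' y) / a y := by
      ext y; have := ha0 y; field_simp
    rw [h2]
    exact h1.div hac fun y => (ha0 y).ne'
  let χ : ContDiffBump (0 : ℝ) := ⟨1, 2, by norm_num, by norm_num⟩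
  have hχC : ContDiff ℝ 1 χ := χ.contDiff
  have hχd : ∀ t, HasDerivAt χ (deriv χ t) t := fun t =>
    ((hχC.differentiable one_ne_zero) t).hasDerivAt
  have hχ'c : Continuous (deriv χ) := hχC.continuous_deriv le_rfl
  have hχs : HasCompactSupport χ := χ.hasCompactSupport
  have hχ0 : ∀ t : ℝ, 2 < |t| → χ t = 0 := by
    intro t ht
    refine χ.zero_of_le_dist ?_
    rw [Real.dist_eq, sub_zero]; exact ht.le
  have hχ'0 : ∀ t : ℝ, 2 < |t| → deriv χ t = 0 := by
    intro t ht
    have : t ∉ tsupport χ := by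
      rw [χ.tsupport_eq, Metric.mem_closedBall, Real.dist_eq, sub_zero, not_le]; exact ht
    by_contra hne
    exact this (support_deriv_subset hne)
  obtain ⟨C, hC⟩ : ∃ C, ∀ t, ‖deriv χ t‖ ≤ C := hχ'c.bounded_above_of_compact_support hχs.deriv
  have hC0 : 0 ≤ C := (norm_nonneg _).trans (hC 0)
  have hZ0 : 0 < Z := (hz 0).trans_le (hZ 0)
  have hε : 0 < γ - gammaBar a r := by linarith
  -- the estimate at scale `R`
  have main : ∀ R : ℝ, |x₀| + 1 ≤ R →
      (γ - gammaBar a r) * (2 * m ^ 2) ≤ E + 6 * μ * C ^ 2 * Z ^ 2 / R := by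
    intro R hR
    have hR0 : 0 < R := by linarith [abs_nonneg x₀]
    let X : ℝ → ℝ := fun x => χ (x / R)
    let X' : ℝ → ℝ := fun x => deriv χ (x / R) / R
    have hXd : ∀ x, HasDerivAt X (X' x) x := by
      intro x
      have := (hχd (x / R)).comp x ((hasDerivAt_id x).div_const R)
      exact this.congr_deriv (by simp only [X']; ring)
    have hXc : Continuous X := continuous_iff_continuousAt.2 fun y => (hXd y).continuousAt
    have hX'c : Continuous X' := (hχ'c.comp (continuous_id.div_const R)).div_const R
    have hout : ∀ x, x ∉ Set.Ioc (-(3 * R)) (3 * R) → 2 < |x / R| := by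
      intro x hx
      rw [abs_div, abs_of_pos hR0, lt_div_iff₀ hR0]
      rw [Set.mem_Ioc, not_and_or, not_lt, not_le] at hx
      rcases hx with h | h
      · linarith [neg_le_abs x]
      · linarith [le_abs_self x]
    have hX0 : ∀ x, x ∉ Set.Ioc (-(3 * R)) (3 * R) → X x = 0 := fun x hx => hχ0 _ (hout x hx)
    have hX'0 : ∀ x, x ∉ Set.Ioc (-(3 * R)) (3 * R) → X' x = 0 := fun x hx => by
      simp only [X', hχ'0 _ (hout x hx), zero_div]
    have hX1 : ∀ x, X x ^ 2 ≤ 1 := fun x => pow_le_one₀ χ.nonneg χ.le_one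
    have hXin : ∀ x, |x| ≤ R → X x = 1 := by
      intro x hx
      refine χ.one_of_mem_closedBall ?_
      rw [Metric.mem_closedBall, Real.dist_eq, sub_zero, abs_div, abs_of_pos hR0,
        div_le_iff₀ hR0]
      simpa [χ] using hx
    let ψ : ℝ → ℝ := fun x => X x * z x
    let ψ' : ℝ → ℝ := fun x => X' x * z x + X x * z' x
    have hψd : ∀ x, HasDerivAt ψ (ψ' x) x := fun x => (hXd x).mul (hd x)
    have hψ'c : Continuous ψ' := (hX'c.mul hzc).add (hXc.mul hz'c)
    have hψc : Continuous ψ := hXc.mul hzc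
    have hder : deriv ψ = ψ' := funext fun x => (hψd x).deriv
    have hψC : ContDiff ℝ 1 ψ := by
      rw [contDiff_one_iff_deriv, hder]
      exact ⟨fun x => (hψd x).differentiableAt, hψ'c⟩
    have hψs : HasCompactSupport ψ := by
      refine HasCompactSupport.intro (isCompact_Icc (a := -(3 * R)) (b := 3 * R)) fun x hx => ?_
      have : X x = 0 := hX0 x fun h => hx (Set.Ioc_subset_Icc_self h)
      simp only [ψ, this, zero_mul]
    have ray := ime_rayleigh μ a r hac hrc (fun x => (ha0 x).le) hr ψ hψC hψs
    rw [hder] at ray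
    rw [← intervalIntegral.integral_eq_integral_of_support_subset (a := -(3 * R)) (b := 3 * R)
        (f := fun x => ψ x ^ 2) (by
          intro x hx
          by_contra h
          exact hx (by simp only [ψ, hX0 x h]; ring)),
      ← intervalIntegral.integral_eq_integral_of_support_subset (a := -(3 * R)) (b := 3 * R)
        (by
          intro x hx
          by_contra h
          exact hx (by simp only [ψ, ψ', hX0 x h, hX'0 x h]; ring))] at ray
    have c1 : Continuous (fun x => r x * ψ x ^ 2 - a x * ψ' x ^ 2) := by fun_prop
    have c2 : Continuous (fun x => ψ x ^ 2) := by fun_prop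
    have c3 : Continuous (fun x => f x * z x * X x ^ 2) := by fun_prop
    have c4 : Continuous (fun x => a x * X' x ^ 2 * z x ^ 2) := by fun_prop
    have c5 : Continuous (fun x => γ * ψ x ^ 2) := by fun_prop
    have c6 : Continuous (fun x => γ * ψ x ^ 2 - (r x * ψ x ^ 2 - a x * ψ' x ^ 2)) := by fun_prop
    have c7 : Continuous (fun x => γ * ψ x ^ 2 - (r x * ψ x ^ 2 - a x * ψ' x ^ 2)
        - f x * z x * X x ^ 2) := by fun_prop
    have c8 : Continuous (fun x => γ * ψ x ^ 2 - (r x * ψ x ^ 2 - a x * ψ' x ^ 2)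
        - f x * z x * X x ^ 2 - a x * X' x ^ 2 * z x ^ 2) := by fun_prop
    have hΦ : ∀ x, HasDerivAt (fun x => a x * z' x * (X x ^ 2 * z x))
        (γ * ψ x ^ 2 - (r x * ψ x ^ 2 - a x * ψ' x ^ 2) - f x * z x * X x ^ 2
          - a x * X' x ^ 2 * z x ^ 2) x := by
      intro x
      have h1 := (hdd x).fun_mul (((hXd x).fun_pow 2).fun_mul (hd x))
      refine h1.congr_deriv ?_
      simp only [ψ, ψ']
      push_cast
      ring
    have ftc := intervalIntegral.integral_eq_sub_of_hasDerivAt (a := -(3 * R)) (b := 3 * R)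
      (fun x _ => hΦ x)
      (c8.intervalIntegrable _ _)
    rw [intervalIntegral.integral_sub
        (c7.intervalIntegrable _ _)
        (c4.intervalIntegrable _ _),
      intervalIntegral.integral_sub
        (c6.intervalIntegrable _ _)
        (c3.intervalIntegrable _ _),
      intervalIntegral.integral_sub
        (c5.intervalIntegrable _ _)
        (c1.intervalIntegrable _ _),
      intervalIntegral.integral_const_mul] at ftc
    have e1 : X (3 * R) = 0 := hχ0 _ (by
      rw [mul_div_assoc, div_self hR0.ne']; norm_num)
    have e2 : X (-(3 * R)) = 0 := hX0 _ (by simp)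
    rw [e1, e2] at ftc
    have h3R : -(3 * R) ≤ 3 * R := by linarith
    have b3 : ∫ x in (-(3 * R))..(3 * R), f x * z x * X x ^ 2 ≤ E := by
      refine le_trans ?_ (hE (3 * R) (by linarith))
      refine intervalIntegral.integral_mono_on h3R (c3.intervalIntegrable _ _)
        ((hzc.mul hfc).intervalIntegrable _ _) fun x _ => ?_
      have h5 := mul_nonneg (hf x) (hz x).le
      have h6 := hX1 x
      nlinarith
    have b4 : ∫ x in (-(3 * R))..(3 * R), a x * X' x ^ 2 * z x ^ 2
        ≤ 6 * μ * C ^ 2 * Z ^ 2 / R := by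
      have h7 : ∫ x in (-(3 * R))..(3 * R), a x * X' x ^ 2 * z x ^ 2
          ≤ ∫ x in (-(3 * R))..(3 * R), μ * (C ^ 2 / R ^ 2) * Z ^ 2 := by
        refine intervalIntegral.integral_mono_on h3R (c4.intervalIntegrable _ _)
          (continuous_const.intervalIntegrable _ _) fun x _ => ?_
        have h8 : X' x ^ 2 ≤ C ^ 2 / R ^ 2 := by
          simp only [X', div_pow]
          have h14 := hC (x / R)
          rw [Real.norm_eq_abs] at h14
          rw [← sq_abs (deriv χ (x / R))]
          gcongr
        have := (ha x).2
        have := (ha0 x).le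
        have := hZ x
        have := (hz x).le
        gcongr
      refine h7.trans (le_of_eq ?_)
      rw [intervalIntegral.integral_const, smul_eq_mul]
      field_simp
      ring
    have b2 : 2 * m ^ 2 ≤ ∫ x in (-(3 * R))..(3 * R), ψ x ^ 2 := by
      have h9 := abs_le.1 (le_refl |x₀|)
      have h10 : ∫ x in (x₀ - 1)..(x₀ + 1), ψ x ^ 2 ≤ ∫ x in (-(3 * R))..(3 * R), ψ x ^ 2 := by
        refine intervalIntegral.integral_mono_interval (by linarith) (by linarith) (by linarith)
          (Eventually.of_forall fun x => sq_nonneg _) (c2.intervalIntegrable _ _)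
      have h11 : ∫ x in (x₀ - 1)..(x₀ + 1), m ^ 2 ≤ ∫ x in (x₀ - 1)..(x₀ + 1), ψ x ^ 2 := by
        refine intervalIntegral.integral_mono_on (by linarith)
          (continuous_const.intervalIntegrable _ _) (c2.intervalIntegrable _ _) fun x hx => ?_
        have h12 : X x = 1 := hXin x (abs_le.2 ⟨by linarith [hx.1], by linarith [hx.2]⟩)
        have h13 : m ≤ z x := hzm x (abs_le.2 ⟨by linarith [hx.1], by linarith [hx.2]⟩)
        simp only [ψ, h12, one_mul]
        gcongr
      rw [intervalIntegral.integral_const, smul_eq_mul] at h11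
      linarith
    have b5 := mul_le_mul_of_nonneg_left b2 hε.le
    linarith
  refine le_of_forall_pos_le_add fun δ hδ => ?_
  set N := 6 * μ * C ^ 2 * Z ^ 2 with hN
  have hN0 : 0 ≤ N := by positivity
  have hR := main (|x₀| + 1 + N / δ) (by have : 0 ≤ N / δ := by positivity
                                         linarith)
  refine hR.trans ?_
  gcongr
  have hq : 0 ≤ N / δ := by positivity
  rw [div_le_iff₀ (by positivity)]
  have : δ * (N / δ) = N := by field_simp
  nlinarith [abs_nonneg x₀]

/-- Proposition 6.2: the invariant measure `ν_γ = φ_γ·φ̃_γ` has positive infimum and is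
bounded above on `ℝ`. -/
theorem invariant_measure_elliptic (μ : ℝ) (hμ : 1 ≤ μ) (a r : ℝ → ℝ)
    (hac : Continuous a) (hrc : Continuous r)
    (ha : ∀ x, 1 / μ ≤ a x ∧ a x ≤ μ) (hr : ∀ x, |r x| ≤ μ)
    (γ : ℝ) (hγ : gammaBar a r < γ)
    (φ φ' φt φt' : ℝ → ℝ)
    (hφ : IsGenPrincEig a r γ Filter.atTop φ φ')
    (hφt : IsGenPrincEig a r γ Filter.atBot φt φt') :
    (∃ c : ℝ, 0 < c ∧ ∀ x : ℝ, c ≤ φ x * φt x) ∧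
    (∃ Cb : ℝ, ∀ x : ℝ, φ x * φt x ≤ Cb) := by

  obtain ⟨hu, hu0, hud, hudd, hul⟩ := hφ
  obtain ⟨hv, hv0, hvd, hvdd, hvl⟩ := hφt
  have hμ0 : 0 < μ := by linarith
  have ha0 : ∀ x, 0 < a x := fun x => lt_of_lt_of_le (by positivity) (ha x).1
  have huc : Continuous φ := continuous_iff_continuousAt.2 fun y => (hud y).continuousAt
  have hvc : Continuous φt := continuous_iff_continuousAt.2 fun y => (hvd y).continuousAt
  -- boundedness on half lines
  obtain ⟨Bu, hBu⟩ : ∃ B, ∀ x, 0 ≤ x → φ x ≤ B := by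
    obtain ⟨N, hN⟩ := eventually_atTop.1 (hul.eventually (gt_mem_nhds one_pos))
    obtain ⟨B, hB⟩ := (isCompact_Icc (a := (0:ℝ)) (b := N)).bddAbove_image huc.continuousOn
    refine ⟨max B 1, fun x hx => ?_⟩
    rcases le_total x N with h | h
    · exact le_max_of_le_left (hB ⟨x, ⟨hx, h⟩, rfl⟩)
    · exact le_max_of_le_right (hN x h).le
  obtain ⟨Bv, hBv⟩ : ∃ B, ∀ x, x ≤ 0 → φt x ≤ B := by
    obtain ⟨N, hN⟩ := eventually_atBot.1 (hvl.eventually (gt_mem_nhds one_pos))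
    obtain ⟨B, hB⟩ := (isCompact_Icc (a := N) (b := (0:ℝ))).bddAbove_image hvc.continuousOn
    refine ⟨max B 1, fun x hx => ?_⟩
    rcases le_total N x with h | h
    · exact le_max_of_le_left (hB ⟨x, ⟨h, hx⟩, rfl⟩)
    · exact le_max_of_le_right (hN x h).le
  -- the Wronskian
  obtain ⟨W, hW⟩ : ∃ W, ∀ x, φ x * (a x * φt' x) - φt x * (a x * φ' x) = W := by
    refine ⟨φ 0 * (a 0 * φt' 0) - φt 0 * (a 0 * φ' 0), fun x => ?_⟩
    have hWd : ∀ x, HasDerivAt (fun x => φ x * (a x * φt' x) - φt x * (a x * φ' x)) 0 x := by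
      intro x
      refine (((hud x).fun_mul (hvdd x)).fun_sub ((hvd x).fun_mul (hudd x))).congr_deriv ?_
      ring
    exact is_const_of_deriv_eq_zero (fun x => (hWd x).differentiableAt)
      (fun x => (hWd x).deriv) x 0
  have hε : 0 < γ - gammaBar a r := by linarith
  obtain ⟨K, hK0, hK⟩ := ime_logder μ hμ a r ha hr γ
  have hKu := hK φ φ' hu hud hudd
  have hKv := hK φt φt' hv hvd hvdd
  have hlow : ∀ x, W ≤ 2 * K * (φ x * φt x) := by
    intro x
    rw [← hW x]
    have h1 := mul_le_mul_of_nonneg_left (abs_le.1 (hKv x)).2 (hu x).le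
    have h2 := mul_le_mul_of_nonneg_left (abs_le.1 (hKu x)).1 (hv x).le
    nlinarith
  have hkk : ∀ w w' : ℝ → ℝ, (∀ x, |a x * w' x| ≤ K * w x) → ∀ x, |w' x| ≤ (K * μ) * w x := by
    intro w w' h x
    have h1 := h x
    rw [abs_mul, abs_of_pos (ha0 x)] at h1
    have h2 : 1 / μ * |w' x| ≤ K * w x :=
      le_trans (mul_le_mul_of_nonneg_right (ha x).1 (abs_nonneg _)) h1
    rw [div_mul_eq_mul_div, one_mul, div_le_iff₀ hμ0] at h2
    linarith
  have hk0 : 0 < K * μ := by positivity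
  have Hu := ime_harnack (K * μ) hk0 φ φ' hu hud (hkk _ _ hKu)
  have Hv := ime_harnack (K * μ) hk0 φt φt' hv hvd (hkk _ _ hKv)
  set e := Real.exp (-(K * μ)) with he
  have he0 : 0 < e := Real.exp_pos _
  -- positivity of the Wronskian
  have hWpos : 0 < W := by
    by_contra! hWn
    have hanti : Antitone (fun x => φt x / φ x) := by
      have hdq : ∀ x, HasDerivAt (fun x => φt x / φ x)
          ((φt' x * φ x - φt x * φ' x) / φ x ^ 2) x := fun x => (hvd x).fun_div (hud x) (hu x).ne'
      refine antitone_of_deriv_nonpos (fun x => (hdq x).differentiableAt) fun x => ?_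
      rw [(hdq x).deriv]
      refine div_nonpos_of_nonpos_of_nonneg ?_ (sq_nonneg _)
      have h1 : a x * (φt' x * φ x - φt x * φ' x) ≤ 0 := by
        have := hW x
        linarith
      by_contra! h2
      have := mul_pos (ha0 x) h2
      linarith
    have hb : ∀ x, φt x ≤ max Bu Bv := by
      intro x
      rcases le_total 0 x with h | h
      · have h1 := hanti h
        simp only [hu0, hv0, div_one] at h1
        rw [div_le_one (hu x)] at h1
        exact le_max_of_le_left (h1.trans (hBu x h))
      · exact le_max_of_le_right (hBv x h)
    have h2 := ime_energy μ hμ a r hac hrc ha hr γ hγ φt φt' (fun _ => 0) hv hvd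
      (fun x => by simpa using hvdd x) (fun _ => le_rfl) continuous_const _ hb 0
      (fun A _ => by simp) 0 e he0.le (fun x hx => by simpa [hv0] using Hv 0 x hx)
    have : 0 < (γ - gammaBar a r) * (2 * e ^ 2) := by positivity
    linarith
  refine ⟨⟨W / (2 * K), by positivity, fun x => ?_⟩,
    ⟨2 * W / ((γ - gammaBar a r) * e ^ 2), fun x₀ => ?_⟩⟩
  · rw [div_le_iff₀ (by positivity)]
    linarith [hlow x]
  -- upper bound at `x₀`
  obtain ⟨h, hh⟩ : ∃ h, h = φt x₀ / φ x₀ := ⟨_, rfl⟩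
  have hu1 := hu x₀
  have hv1 := hv x₀
  have hh0 : 0 < h := by rw [hh]; positivity
  let D : ℝ → ℝ := fun x => φt x + h * φ x
  have hDpos : ∀ x, 0 < D x := fun x => add_pos (hv x) (mul_pos hh0 (hu x))
  have hDd : ∀ x, HasDerivAt D (φt' x + h * φ' x) x := fun x =>
    (hvd x).fun_add ((hud x).const_mul h)
  have hDc : Continuous D := hvc.add (continuous_const.mul huc)
  let z : ℝ → ℝ := fun x => φ x * φt x / D x
  let z' : ℝ → ℝ := fun x => (φ' x * φt x ^ 2 + h * φ x ^ 2 * φt' x) / D x ^ 2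
  let f : ℝ → ℝ := fun x => 2 * h * W ^ 2 / (a x * D x ^ 3)
  have hz : ∀ x, 0 < z x := fun x => div_pos (mul_pos (hu x) (hv x)) (hDpos x)
  have hzd : ∀ x, HasDerivAt z (z' x) x := by
    intro x
    refine (((hud x).fun_mul (hvd x)).fun_div (hDd x) (hDpos x).ne').congr_deriv ?_
    simp only [z', D]
    congr 1
    ring
  have hzdd : ∀ x, HasDerivAt (fun y => a y * z' y) ((γ - r x) * z x - f x) x := by
    intro x
    have e1 : (fun y => a y * z' y) = fun y =>
        ((a y * φ' y) * φt y ^ 2 + h * φ y ^ 2 * (a y * φt' y)) / D y ^ 2 := by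
      ext y; simp only [z']; ring
    rw [e1]
    have h1 := (((hudd x).fun_mul ((hvd x).fun_pow 2)).fun_add
      ((((hud x).fun_pow 2).const_mul h).fun_mul (hvdd x))).fun_div ((hDd x).fun_pow 2)
      (pow_ne_zero 2 (hDpos x).ne')
    refine h1.congr_deriv ?_
    have hDx := hDpos x
    have hax := ha0 x
    simp only [z, f, ← hW x]
    push_cast
    have hDe : D x = φt x + h * φ x := rfl
    rw [div_eq_iff (by positivity)]
    field_simp
    rw [hDe]
    ring
  have hf : ∀ x, 0 ≤ f x := fun x => by
    have := ha0 x
    have := hDpos x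
    simp only [f]; positivity
  have hfc : Continuous f := continuous_const.div (hac.mul (hDc.pow 3)) fun x =>
    (mul_pos (ha0 x) (pow_pos (hDpos x) 3)).ne'
  have hzc : Continuous z := (huc.mul hvc).div hDc fun x => (hDpos x).ne'
  have hzu : ∀ x, z x ≤ φ x := fun x => by
    have h1 := hu x
    have h2 := hv x
    rw [div_le_iff₀ (hDpos x)]
    simp only [D]
    have : 0 ≤ φ x * (h * φ x) := by positivity
    linarith
  have hzv : ∀ x, z x ≤ φt x / h := fun x => by
    have h1 := hu x
    have h2 := hv x
    rw [div_le_div_iff₀ (hDpos x) hh0]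
    simp only [D]
    have : 0 ≤ φt x * φt x := by positivity
    linarith
  have hZ : ∀ x, z x ≤ max Bu (Bv / h) := by
    intro x
    rcases le_total 0 x with h1 | h1
    · exact le_max_of_le_left ((hzu x).trans (hBu x h1))
    · refine le_max_of_le_right ((hzv x).trans ?_)
      have := hBv x h1
      gcongr
  have hE : ∀ A, 0 ≤ A → ∫ x in (-A)..A, z x * f x ≤ W / h := by
    intro A hA
    let Q' : ℝ → ℝ := fun x => 2 * h * W ^ 2 * φ x / (a x * D x ^ 3)
    have hQ'c : Continuous Q' := (continuous_const.mul huc).div (hac.mul (hDc.pow 3)) fun x =>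
      (mul_pos (ha0 x) (pow_pos (hDpos x) 3)).ne'
    have hQd : ∀ x, HasDerivAt (fun x => -(W * h * (φ x / D x) ^ 2)) (Q' x) x := by
      intro x
      have h1 := ((((hud x).fun_div (hDd x) (hDpos x).ne').fun_pow 2).const_mul (W * h)).fun_neg
      refine h1.congr_deriv ?_
      have hDx := hDpos x
      have hax := ha0 x
      have e2 : φ' x * D x - φ x * (φt' x + h * φ' x) = - W / a x := by
        rw [← hW x, eq_div_iff hax.ne']
        simp only [D]
        ring
      rw [e2]
      simp only [Q']
      push_cast
      field_simp
    have h2 : ∫ x in (-A)..A, z x * f x ≤ ∫ x in (-A)..A, Q' x := by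
      refine intervalIntegral.integral_mono_on (by linarith)
        ((hzc.mul hfc).intervalIntegrable _ _) (hQ'c.intervalIntegrable _ _) fun x _ => ?_
      have e3 : Q' x = φ x * f x := by simp only [Q', f]; ring
      rw [e3]
      exact mul_le_mul_of_nonneg_right (hzu x) (hf x)
    refine h2.trans ?_
    rw [intervalIntegral.integral_eq_sub_of_hasDerivAt (fun x _ => hQd x)
      (hQ'c.intervalIntegrable _ _)]
    have h3 : (φ (-A) / D (-A)) ≤ 1 / h := by
      rw [div_le_div_iff₀ (hDpos _) hh0]
      simp only [D]
      linarith [hv (-A)]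
    have h4 : 0 ≤ φ (-A) / D (-A) := (div_pos (hu _) (hDpos _)).le
    have h5 : (φ (-A) / D (-A)) ^ 2 ≤ (1 / h) ^ 2 := by gcongr
    have h6 : W * h * (φ (-A) / D (-A)) ^ 2 ≤ W * h * (1 / h) ^ 2 := by gcongr
    have h7 : W * h * (1 / h) ^ 2 = W / h := by field_simp
    have h8 : 0 ≤ W * h * (φ A / D A) ^ 2 := by positivity
    linarith
  have hzm : ∀ x, |x - x₀| ≤ 1 → e * φ x₀ / 2 ≤ z x := by
    intro x hx
    have h1 := Hu x₀ x hx
    have h2 := Hv x₀ x hx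
    have h3 := hu x
    have h4 := hv x
    rw [div_le_div_iff₀ two_pos (hDpos x)]
    simp only [D]
    have h5 : e * φ x₀ * φt x ≤ φ x * φt x := by gcongr
    have h6 : e * φt x₀ * φ x ≤ φt x * φ x := by gcongr
    have h7 : h * φ x₀ = φt x₀ := by rw [hh]; field_simp
    have h8 : e * φ x₀ * (φt x + h * φ x) = e * φ x₀ * φt x + e * (h * φ x₀) * φ x := by ring
    rw [h8, h7]
    linarith
  have fin := ime_energy μ hμ a r hac hrc ha hr γ hγ z z' f hz hzd hzdd hf hfc _ hZ _ hE x₀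
    (e * φ x₀ / 2) (by positivity) hzm
  have h9 : W / h = W * φ x₀ / φt x₀ := by rw [hh]; field_simp
  rw [h9, le_div_iff₀ hv1] at fin
  rw [le_div_iff₀ (by positivity)]
  refine le_of_mul_le_mul_right ?_ hu1
  linarith
end
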